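/- arXiv:2010.09026 — 3 statements merged into one kernel-verified Lean document; each statement's English description precedes it below -/
import Mathlib

section
/- For all real numbers a and b, the inequality | |a+b|(a+b) − |a|a − 2|a|b | ≤ 7b² holds. -/
/-!
Up to sign, the quantity inside the outer absolute value is `b ^ 2` when `a` and `a + b` have the
same sign, and `b ^ 2 - 2 * (a + b) ^ 2` otherwise. In the latter case `0` lies between `a` and
`a + b`, so `|a + b| ≤ |b|`, and the bound follows (the constant `1` would suffice).
-/

theorem abs_sq_expansion_ineq (a b : ℝ) :
    |(|a + b| * (a + b)) - |a| * a - 2 * |a| * b| ≤ 7 * b ^ 2 := by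
  rcases le_total 0 a with ha | ha <;> rcases le_total 0 (a + b) with hab | hab <;>
    simp only [abs_of_nonneg, abs_of_nonpos, ha, hab] <;> rw [abs_le] <;>
    constructor <;>
    nlinarith [sq_nonneg b, sq_nonneg (a + b), sq_nonneg a,
      mul_self_nonneg (a + 2 * b), mul_self_nonneg (a - b)]
end

section
/- Fix R > 0. Then δ^{−3} · ∫_{{x ∈ ℝ⁶ : ‖x‖ > R√δ}} U_{δ,0}(x)² dx tends to 288π³/R² as δ → 0⁺. -/
/-!
The integral can be computed exactly. In polar coordinates the integral of the squared bubble over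
`a < ‖x‖` is `ω₆ = π³` times `∫_{r > a} r⁵ · 576 δ⁴ / (δ² + r²)⁴ dr`, and the integrand has the
elementary primitive `96 δ² (r² / (δ² + r²))³`, which tends to `96 δ²` at infinity
(`integral_radial`). With `a² = R² δ` this gives, after multiplication by `δ⁻³`,
`96 π³ (3 R⁴ + 3 R² δ + δ²) / (R² + δ)³`, a function of `δ` continuous at `0` with value
`288 π³ / R²`.
-/

open MeasureTheory Filter

/-- The standard bubble in dimension 6. -/
noncomputable def bubble (δ : ℝ) (ξ x : EuclideanSpace ℝ (Fin 6)) : ℝ :=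
  24 * δ ^ 2 / (δ ^ 2 + ‖x - ξ‖ ^ 2) ^ 2

lemma hasDerivAt_radial_primitive {δ : ℝ} (hδ : 0 < δ) (r : ℝ) :
    HasDerivAt (fun r : ℝ => 96 * δ ^ 2 * (r ^ 2 / (δ ^ 2 + r ^ 2)) ^ 3)
      (r ^ 5 * (24 * δ ^ 2 / (δ ^ 2 + r ^ 2) ^ 2) ^ 2) r := by
  have h0 : δ ^ 2 + r ^ 2 ≠ 0 := by positivity
  have h1 : HasDerivAt (fun r : ℝ => r ^ 2) (2 * r) r := by
    simpa using hasDerivAt_pow 2 r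
  have h := ((h1.div (h1.const_add (δ ^ 2)) h0).pow 3).const_mul (96 * δ ^ 2)
  refine h.congr_deriv ?_
  simp only [Pi.div_apply, Nat.reduceSub, Nat.cast_ofNat]
  field_simp
  ring

lemma tendsto_radial_primitive (δ : ℝ) :
    Tendsto (fun r : ℝ => 96 * δ ^ 2 * (r ^ 2 / (δ ^ 2 + r ^ 2)) ^ 3) atTop
      (nhds (96 * δ ^ 2)) := by
  have hinv : Tendsto (fun r : ℝ => (r ^ 2)⁻¹) atTop (nhds 0) :=
    (tendsto_pow_atTop two_ne_zero).inv_tendsto_atTop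
  have h : Tendsto (fun r : ℝ => 96 * δ ^ 2 * ((δ ^ 2 * (r ^ 2)⁻¹ + 1)⁻¹) ^ 3) atTop
      (nhds (96 * δ ^ 2 * ((δ ^ 2 * 0 + 1)⁻¹) ^ 3)) :=
    ((((hinv.const_mul (δ ^ 2)).add_const 1).inv₀ (by norm_num)).pow 3).const_mul _
  have hlim : 96 * δ ^ 2 * ((δ ^ 2 * 0 + 1)⁻¹) ^ 3 = 96 * δ ^ 2 := by norm_num
  rw [hlim] at h
  refine h.congr' ?_
  filter_upwards [eventually_gt_atTop 0] with r hr
  have h0 : δ ^ 2 + r ^ 2 ≠ 0 := by positivity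
  congr 2
  field_simp

lemma integral_radial {δ a : ℝ} (hδ : 0 < δ) (ha : 0 ≤ a) :
    ∫ r in Set.Ioi a, r ^ 5 * (24 * δ ^ 2 / (δ ^ 2 + r ^ 2) ^ 2) ^ 2 =
      96 * δ ^ 2 - 96 * δ ^ 2 * (a ^ 2 / (δ ^ 2 + a ^ 2)) ^ 3 := by
  refine integral_Ioi_of_hasDerivAt_of_nonneg'
    (fun r _ => hasDerivAt_radial_primitive hδ r) ?_ (tendsto_radial_primitive δ)
  intro r hr
  have : 0 < r := lt_of_le_of_lt ha hr
  positivity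

/-- The surface area of the unit sphere, as six times the volume of the unit ball. -/
lemma six_mul_volume_unit_ball :
    6 * (volume : Measure (EuclideanSpace ℝ (Fin 6))).real (Metric.ball 0 1) = Real.pi ^ 3 := by
  rw [Measure.real, InnerProductSpace.volume_ball_of_dim_even (k := 3) (by simp)]
  simp [Nat.factorial]
  rw [ENNReal.toReal_ofReal (by positivity)]
  ring

lemma integral_bubble_sq {δ a : ℝ} (hδ : 0 < δ) (ha : 0 ≤ a) :
    ∫ x in {x : EuclideanSpace ℝ (Fin 6) | a < ‖x‖}, (bubble δ 0 x) ^ 2 =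
      Real.pi ^ 3 * (96 * δ ^ 2 - 96 * δ ^ 2 * (a ^ 2 / (δ ^ 2 + a ^ 2)) ^ 3) := by
  have hms : MeasurableSet {x : EuclideanSpace ℝ (Fin 6) | a < ‖x‖} :=
    measurableSet_lt measurable_const measurable_norm
  -- The truncation is moved into the radial profile, so that polar coordinates apply.
  let f : ℝ → ℝ := (Set.Ioi a).indicator fun r => (24 * δ ^ 2 / (δ ^ 2 + r ^ 2) ^ 2) ^ 2
  have hf : ∀ x : EuclideanSpace ℝ (Fin 6),
      {x : EuclideanSpace ℝ (Fin 6) | a < ‖x‖}.indicator (fun x => (bubble δ 0 x) ^ 2) x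
        = f ‖x‖ := by
    intro x
    simp [f, Set.indicator_apply, bubble]
  have hr : ∫ r in Set.Ioi (0 : ℝ), r ^ 5 * f r =
      ∫ r in Set.Ioi a, r ^ 5 * (24 * δ ^ 2 / (δ ^ 2 + r ^ 2) ^ 2) ^ 2 := by
    have : ∀ r, r ^ 5 * f r = (Set.Ioi a).indicator
        (fun r => r ^ 5 * (24 * δ ^ 2 / (δ ^ 2 + r ^ 2) ^ 2) ^ 2) r := by
      intro r
      simp [f, Set.indicator_apply]
    simp_rw [this]
    rw [setIntegral_indicator measurableSet_Ioi, Set.Ioi_inter_Ioi, sup_eq_right.2 ha]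
  rw [← integral_indicator hms]
  simp_rw [hf]
  rw [integral_fun_norm_addHaar volume f]
  simp only [finrank_euclideanSpace, Fintype.card_fin, nsmul_eq_mul, smul_eq_mul, Nat.cast_ofNat,
    Nat.reduceSub]
  rw [hr, integral_radial hδ ha, ← mul_assoc, six_mul_volume_unit_ball]

theorem bubble_sq_exterior_asymptotics (R : ℝ) (hR : 0 < R) :
    Tendsto
      (fun δ : ℝ =>
        δ ^ (-3 : ℤ) *
          ∫ x in {x : EuclideanSpace ℝ (Fin 6) | R * Real.sqrt δ < ‖x‖},
            (bubble δ 0 x) ^ 2)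
      (nhdsWithin 0 (Set.Ioi 0)) (nhds (288 * Real.pi ^ 3 / R ^ 2)) := by
  have hc : ContinuousAt (fun δ : ℝ =>
      96 * Real.pi ^ 3 * (3 * R ^ 4 + 3 * R ^ 2 * δ + δ ^ 2) / (R ^ 2 + δ) ^ 3) 0 := by
    refine ContinuousAt.div (by fun_prop) (by fun_prop) ?_
    simp only [add_zero]
    positivity
  have hlim : 96 * Real.pi ^ 3 * (3 * R ^ 4 + 3 * R ^ 2 * 0 + 0 ^ 2) / (R ^ 2 + 0) ^ 3 =
      288 * Real.pi ^ 3 / R ^ 2 := by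
    simp only [add_zero]
    field_simp
    ring
  have ht := hc.tendsto.mono_left (nhdsWithin_le_nhds (s := Set.Ioi 0))
  rw [hlim] at ht
  refine ht.congr' ?_
  filter_upwards [self_mem_nhdsWithin] with δ hδ
  have hδ : 0 < δ := hδ
  rw [integral_bubble_sq hδ (by positivity), mul_pow, Real.sq_sqrt hδ.le]
  have hq : R ^ 2 * δ / (δ ^ 2 + R ^ 2 * δ) = R ^ 2 / (R ^ 2 + δ) := by
    field_simp
    ring
  have hz : δ ^ (-3 : ℤ) = (δ ^ 3)⁻¹ := by
    rw [zpow_neg]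
    norm_cast
  rw [hq, hz]
  field_simp
  ring
end

section
/- Fix R > 0. Then δ^{−3} · ∫_{{x ∈ ℝ⁶ : ‖x‖ < R√δ}} U_{δ,0}(x) dx tends to 12π³R² as δ → 0⁺. -/
/-!
In polar coordinates the mass of the bubble on a ball is `π³ ∫₀ᵃ y⁵ · 24δ² / (δ² + y²)² dy`, where
`π³` is the area of the unit sphere in `ℝ⁶`. The radial integrand has the elementary antiderivative
`12δ² (s - 2δ² log s - δ⁴ / s)` with `s = δ² + y²`, which makes the integral explicit
(`setIntegral_bubble`). For `a = R√δ` and after division by `δ³` the result is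
`12π³ (R² - 2δ log (δ + R²) + 2δ log δ - δ² / (δ + R²) + δ)`, and every term except `R²` tends to `0`
with `δ`.
-/

open MeasureTheory Filter

/-- Polar coordinates in `ℝ⁶` for radial functions restricted to a centered ball. -/
lemma setIntegral_norm_lt_six (f : ℝ → ℝ) {a : ℝ} (ha : 0 ≤ a) :
    ∫ x in {x : EuclideanSpace ℝ (Fin 6) | ‖x‖ < a}, f ‖x‖ =
      Real.pi ^ 3 * ∫ y in (0 : ℝ)..a, y ^ 5 * f y := by
  have hm : MeasurableSet {x : EuclideanSpace ℝ (Fin 6) | ‖x‖ < a} :=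
    measurableSet_lt measurable_norm measurable_const
  have hball : (volume : Measure (EuclideanSpace ℝ (Fin 6))).real (Metric.ball 0 1)
      = Real.pi ^ 3 / 6 := by
    have hG : Real.Gamma (((6 : ℕ) : ℝ) / 2 + 1) = 6 := by
      rw [show ((6 : ℕ) : ℝ) / 2 + 1 = (3 : ℕ) + 1 by norm_num, Real.Gamma_nat_eq_factorial]
      norm_num [Nat.factorial]
    have hs : √Real.pi ^ 6 = Real.pi ^ 3 := by
      rw [show (6 : ℕ) = 2 * 3 from rfl, pow_mul, Real.sq_sqrt Real.pi_pos.le]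
    rw [Measure.real, EuclideanSpace.volume_ball, Fintype.card_fin, hG, hs,
      ENNReal.ofReal_one, one_pow, one_mul, ENNReal.toReal_ofReal (by positivity)]
  have hpolar := integral_fun_norm_addHaar
    (volume : Measure (EuclideanSpace ℝ (Fin 6))) ((Set.Iio a).indicator f)
  have hL : ∫ x in {x : EuclideanSpace ℝ (Fin 6) | ‖x‖ < a}, f ‖x‖ =
      ∫ x : EuclideanSpace ℝ (Fin 6), (Set.Iio a).indicator f ‖x‖ := by
    rw [← integral_indicator hm]
    rfl
  have hR : ∫ y in Set.Ioi (0 : ℝ), y ^ 5 • (Set.Iio a).indicator f y =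
      ∫ y in (0 : ℝ)..a, y ^ 5 * f y := by
    have h : (fun y : ℝ => y ^ 5 • (Set.Iio a).indicator f y) =
        (Set.Iio a).indicator (fun y => y ^ 5 * f y) := by
      ext y
      by_cases hy : y ∈ Set.Iio a <;> simp [hy]
    rw [h, setIntegral_indicator measurableSet_Iio, Set.Ioi_inter_Iio,
      intervalIntegral.integral_of_le ha, integral_Ioc_eq_integral_Ioo]
  rw [hL, hpolar, finrank_euclideanSpace_fin, hball, hR]
  simp only [nsmul_eq_mul, smul_eq_mul]
  push_cast
  ring

lemma integral_radial_bubble {δ : ℝ} (hδ : 0 < δ) (a : ℝ) :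
    ∫ y in (0 : ℝ)..a, y ^ 5 * (24 * δ ^ 2 / (δ ^ 2 + y ^ 2) ^ 2) =
      12 * δ ^ 2 * ((δ ^ 2 + a ^ 2) - 2 * δ ^ 2 * Real.log (δ ^ 2 + a ^ 2)
        - δ ^ 4 / (δ ^ 2 + a ^ 2))
      - 12 * δ ^ 2 * (δ ^ 2 - 2 * δ ^ 2 * Real.log (δ ^ 2) - δ ^ 2) := by
  have hpos : ∀ y : ℝ, δ ^ 2 + y ^ 2 ≠ 0 := fun y => by positivity
  rw [intervalIntegral.integral_eq_sub_of_hasDerivAt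
    (f := fun y => 12 * δ ^ 2 * ((δ ^ 2 + y ^ 2) - 2 * δ ^ 2 * Real.log (δ ^ 2 + y ^ 2)
        - δ ^ 4 / (δ ^ 2 + y ^ 2)))]
  · field_simp
    ring_nf
  · intro y _
    have hs : HasDerivAt (fun y : ℝ => δ ^ 2 + y ^ 2) (2 * y) y := by
      simpa using (hasDerivAt_pow 2 y).const_add (δ ^ 2)
    have h := ((hs.sub ((hs.log (hpos y)).const_mul (2 * δ ^ 2))).sub
      ((hasDerivAt_const y (δ ^ 4)).div hs (hpos y))).const_mul (12 * δ ^ 2)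
    refine h.congr_deriv ?_
    have := hpos y
    field_simp
    ring
  · apply Continuous.intervalIntegrable
    exact (continuous_pow 5).mul (Continuous.div (by fun_prop) (by fun_prop)
      fun y => pow_ne_zero 2 (hpos y))

lemma setIntegral_bubble {δ a : ℝ} (hδ : 0 < δ) (ha : 0 ≤ a) :
    ∫ x in {x : EuclideanSpace ℝ (Fin 6) | ‖x‖ < a}, bubble δ 0 x =
      Real.pi ^ 3 * (12 * δ ^ 2 * ((δ ^ 2 + a ^ 2) - 2 * δ ^ 2 * Real.log (δ ^ 2 + a ^ 2)
        - δ ^ 4 / (δ ^ 2 + a ^ 2))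
      - 12 * δ ^ 2 * (δ ^ 2 - 2 * δ ^ 2 * Real.log (δ ^ 2) - δ ^ 2)) := by
  rw [← integral_radial_bubble hδ a, ← setIntegral_norm_lt_six _ ha]
  simp only [bubble, sub_zero]

theorem bubble_interior_asymptotics (R : ℝ) (hR : 0 < R) :
    Tendsto
      (fun δ : ℝ =>
        δ ^ (-3 : ℤ) *
          ∫ x in {x : EuclideanSpace ℝ (Fin 6) | ‖x‖ < R * Real.sqrt δ},
            bubble δ 0 x)
      (nhdsWithin 0 (Set.Ioi 0)) (nhds (12 * Real.pi ^ 3 * R ^ 2)) := by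
  -- `δ * log δ` extends continuously by `0` to `δ = 0`, so the limit is the value there.
  have hlim : Tendsto (fun δ : ℝ => 12 * Real.pi ^ 3 *
      (R ^ 2 - 2 * (δ * Real.log (δ + R ^ 2)) + 2 * (δ * Real.log δ)
        - δ ^ 2 / (δ + R ^ 2) + δ)) (nhds 0) (nhds (12 * Real.pi ^ 3 * R ^ 2)) := by
    have hR0 : (0 : ℝ) + R ^ 2 ≠ 0 := by positivity
    have hadd : ContinuousAt (fun δ : ℝ => δ + R ^ 2) 0 := by fun_prop
    have hlog : ContinuousAt (fun δ : ℝ => δ * Real.log (δ + R ^ 2)) 0 :=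
      continuousAt_id.mul (hadd.log hR0)
    have hdiv : ContinuousAt (fun δ : ℝ => δ ^ 2 / (δ + R ^ 2)) 0 :=
      (continuousAt_id.pow 2).div hadd hR0
    have hmul : ContinuousAt (fun δ : ℝ => δ * Real.log δ) 0 :=
      Real.continuous_mul_log.continuousAt
    have hc := (((((continuousAt_const (y := R ^ 2)).sub (hlog.const_mul 2)).add
      (hmul.const_mul 2)).sub hdiv).add continuousAt_id).const_mul (12 * Real.pi ^ 3)
    simpa [ContinuousAt] using hc.tendsto
  refine (hlim.mono_left nhdsWithin_le_nhds).congr' ?_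
  filter_upwards [self_mem_nhdsWithin] with δ hδ
  have hδ : 0 < δ := hδ
  have hsum : δ ^ 2 + (R * √δ) ^ 2 = δ * (δ + R ^ 2) := by
    rw [mul_pow, Real.sq_sqrt hδ.le]
    ring
  have hne : δ + R ^ 2 ≠ 0 := by positivity
  rw [setIntegral_bubble hδ (by positivity), hsum, Real.log_mul hδ.ne' hne, Real.log_pow,
    show δ ^ (-3 : ℤ) = (δ ^ 3)⁻¹ from by rw [zpow_neg]; norm_cast]
  field_simp
  push_cast
  ring
end
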